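/- Let S be a stream of N items and run the Misra-Gries algorithm with capacity k on S. Then for every t ∈ {0, 1, …, N} and every item x ∈ U, the table after t items satisfies C_t[x] ≤ f_x(t), and f_x(t) − C_t[x] is at most the number of decrement steps performed during the first t items; consequently f_x(t) ≤ C_t[x] + ⌊t/(k+1)⌋. -/

import Mathlib

/-!
Misra-Gries algorithm with capacity `k` over a stream `S : List U`:
prefix guarantees relating the table `C_t` after `t` items to the prefix
frequencies `f_x(t)` and the number of decrement steps.
-/

/-- One step of the Misra-Gries algorithm with capacity `k`. -/
def mgStep {U : Type*} [Fintype U] [DecidableEq U] (k : ℕ) (C : U → ℕ) (a : U) : U → ℕ :=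
  if 0 < C a then
    Function.update C a (C a + 1)
  else if (Finset.univ.filter fun y => 0 < C y).card < k then
    Function.update C a 1
  else
    fun y => C y - 1

/-- Running Misra-Gries with capacity `k` on the stream `S`, starting from the
all-zero table. -/
def mgRun {U : Type*} [Fintype U] [DecidableEq U] (k : ℕ) (S : List U) : U → ℕ :=
  S.foldl (mgStep k) fun _ => 0

/-- The number of decrement steps performed by the Misra-Gries algorithm with
capacity `k`, starting from table `C`, while processing the stream. -/
def mgDecs {U : Type*} [Fintype U] [DecidableEq U] (k : ℕ) : (U → ℕ) → List U → ℕ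
  | _, [] => 0
  | C, a :: rest =>
      (if 0 < C a ∨ (Finset.univ.filter fun y => 0 < C y).card < k then 0 else 1)
        + mgDecs k (mgStep k C a) rest

/-!
Only a decrement step widens the gap between the frequency of an item and its counter, and by at
most one: either a positive counter drops by one, or the arriving item, whose counter is zero, is
not counted. A decrement step discards at least `k + 1` units of weight: one from each of at least
`k` positive counters, and the arriving item. Since each item of the stream brings one unit of
weight, there are at most `⌊t / (k + 1)⌋` decrement steps among the first `t`.
-/

theorem sum_sub_one_add_card_pos {ι : Type*} (s : Finset ι) (f : ι → ℕ) :
    ∑ i ∈ s, (f i - 1) + (s.filter fun i => 0 < f i).card = ∑ i ∈ s, f i := by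
  rw [Finset.card_filter, ← Finset.sum_add_distrib]
  refine Finset.sum_congr rfl fun i _ => ?_
  split_ifs <;> omega

theorem count_singleton_eq_single {α : Type*} [DecidableEq α] (a x : α) :
    [a].count x = (Pi.single a 1 : α → ℕ) x := by
  simp only [List.count_singleton, Pi.single_apply, beq_iff_eq, eq_comm (a := a)]

section MisraGries

variable {U : Type*} [Fintype U] {k : ℕ} {C : U → ℕ} {a : U}

/-- The arrival of `a` at the table `C` triggers a decrement step of the Misra-Gries algorithm with
capacity `k`. The card bound is `k ≤` rather than `k =` to cover arbitrary tables; those reached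
from the zero table never have more than `k` positive counters. -/
def IsDecrementStep (k : ℕ) (C : U → ℕ) (a : U) : Prop :=
  C a = 0 ∧ k ≤ (Finset.univ.filter fun y => 0 < C y).card

theorem not_isDecrementStep_iff :
    ¬ IsDecrementStep k C a ↔ 0 < C a ∨ (Finset.univ.filter fun y => 0 < C y).card < k := by
  rw [IsDecrementStep, not_and_or, not_le, Nat.pos_iff_ne_zero]

variable [DecidableEq U]

theorem mgStep_of_isDecrementStep (h : IsDecrementStep k C a) : mgStep k C a = C - 1 := by
  rw [mgStep, if_neg h.1.not_gt, if_neg h.2.not_gt]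
  rfl

theorem mgStep_of_not_isDecrementStep (h : ¬ IsDecrementStep k C a) :
    mgStep k C a = C + Pi.single a 1 := by
  have update_succ : Function.update C a (C a + 1) = C + Pi.single a 1 := by
    ext x
    obtain rfl | hx := eq_or_ne x a <;> simp [*]
  rw [mgStep, ← update_succ]
  split_ifs with hpos hcard
  · rfl
  · rw [Nat.eq_zero_of_not_pos hpos]
  · exact ((not_isDecrementStep_iff.mp h).elim hpos hcard).elim

theorem mgDecs_cons (k : ℕ) (C : U → ℕ) (a : U) (l : List U) :
    mgDecs k C (a :: l) = mgDecs k C [a] + mgDecs k (mgStep k C a) l := by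
  simp only [mgDecs, Nat.add_zero]

theorem mgDecs_singleton_of_isDecrementStep (h : IsDecrementStep k C a) :
    mgDecs k C [a] = 1 := by
  rw [mgDecs, if_neg (mt not_isDecrementStep_iff.mpr (not_not_intro h)), mgDecs]

theorem mgDecs_singleton_of_not_isDecrementStep (h : ¬ IsDecrementStep k C a) :
    mgDecs k C [a] = 0 := by
  rw [mgDecs, if_pos (not_isDecrementStep_iff.mp h), mgDecs]

theorem mgStep_apply_le (k : ℕ) (C : U → ℕ) (a x : U) :
    mgStep k C a x ≤ C x + [a].count x := by
  by_cases h : IsDecrementStep k C a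
  · rw [mgStep_of_isDecrementStep h]
    exact (Nat.sub_le _ _).trans (Nat.le_add_right _ _)
  · rw [mgStep_of_not_isDecrementStep h, Pi.add_apply, count_singleton_eq_single]

theorem add_count_le_mgStep_apply_add_mgDecs (k : ℕ) (C : U → ℕ) (a x : U) :
    C x + [a].count x ≤ mgStep k C a x + mgDecs k C [a] := by
  by_cases h : IsDecrementStep k C a
  · rw [mgStep_of_isDecrementStep h, mgDecs_singleton_of_isDecrementStep h]
    obtain rfl | hxa := eq_or_ne x a
    · simp [h.1]
    · simpa [hxa.symm] using le_tsub_add (a := 1) (b := C x)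
  · rw [mgStep_of_not_isDecrementStep h, Pi.add_apply, count_singleton_eq_single]
    exact Nat.le_add_right _ _

theorem sum_mgStep_add_mul_mgDecs_le (k : ℕ) (C : U → ℕ) (a : U) :
    ∑ x, mgStep k C a x + (k + 1) * mgDecs k C [a] ≤ ∑ x, C x + 1 := by
  by_cases h : IsDecrementStep k C a
  · rw [mgStep_of_isDecrementStep h, mgDecs_singleton_of_isDecrementStep h, mul_one, ← add_assoc]
    calc ∑ x, (C x - 1) + k + 1
        ≤ ∑ x, (C x - 1) + (Finset.univ.filter fun y => 0 < C y).card + 1 := by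
          gcongr
          exact h.2
      _ = ∑ x, C x + 1 := by rw [sum_sub_one_add_card_pos]
  · rw [mgStep_of_not_isDecrementStep h, mgDecs_singleton_of_not_isDecrementStep h]
    simp [Finset.sum_add_distrib]

theorem foldl_mgStep_apply_le (k : ℕ) (C : U → ℕ) (l : List U) (x : U) :
    l.foldl (mgStep k) C x ≤ C x + l.count x := by
  induction l generalizing C with
  | nil => rfl
  | cons a l ih =>
    calc l.foldl (mgStep k) (mgStep k C a) x
        ≤ mgStep k C a x + l.count x := ih _
      _ ≤ C x + [a].count x + l.count x := by gcongr; exact mgStep_apply_le k C a x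
      _ = C x + (a :: l).count x := by rw [add_assoc, ← List.count_append, List.singleton_append]

theorem add_count_le_foldl_mgStep_apply_add_mgDecs (k : ℕ) (C : U → ℕ) (l : List U) (x : U) :
    C x + l.count x ≤ l.foldl (mgStep k) C x + mgDecs k C l := by
  induction l generalizing C with
  | nil => rfl
  | cons a l ih =>
    calc C x + (a :: l).count x
        = C x + [a].count x + l.count x := by
          rw [add_assoc, ← List.count_append, List.singleton_append]
      _ ≤ mgStep k C a x + mgDecs k C [a] + l.count x := by
          gcongr ?_ + _
          exact add_count_le_mgStep_apply_add_mgDecs k C a x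
      _ = mgStep k C a x + l.count x + mgDecs k C [a] := add_right_comm _ _ _
      _ ≤ l.foldl (mgStep k) (mgStep k C a) x + mgDecs k (mgStep k C a) l + mgDecs k C [a] := by
          gcongr ?_ + _
          exact ih _
      _ = (a :: l).foldl (mgStep k) C x + mgDecs k C (a :: l) := by
          rw [mgDecs_cons k C a l, List.foldl_cons, add_assoc, add_comm (mgDecs k C [a])]

theorem sum_foldl_mgStep_add_mul_mgDecs_le (k : ℕ) (C : U → ℕ) (l : List U) :
    ∑ x, l.foldl (mgStep k) C x + (k + 1) * mgDecs k C l ≤ ∑ x, C x + l.length := by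
  induction l generalizing C with
  | nil => rfl
  | cons a l ih =>
    have step := sum_mgStep_add_mul_mgDecs_le k C a
    have rest := ih (mgStep k C a)
    rw [mgDecs_cons, List.foldl_cons, List.length_cons, mul_add]
    linarith

theorem mgRun_apply_le_count (k : ℕ) (l : List U) (x : U) : mgRun k l x ≤ l.count x := by
  simpa only [mgRun, zero_add] using foldl_mgStep_apply_le k (fun _ => 0) l x

theorem count_le_mgRun_apply_add_mgDecs (k : ℕ) (l : List U) (x : U) :
    l.count x ≤ mgRun k l x + mgDecs k (fun _ => 0) l := by
  simpa only [mgRun, zero_add] using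
    add_count_le_foldl_mgStep_apply_add_mgDecs k (fun _ => 0) l x

theorem mgDecs_zero_le_length_div (k : ℕ) (l : List U) :
    mgDecs k (fun _ => 0) l ≤ l.length / (k + 1) := by
  rw [Nat.le_div_iff_mul_le k.succ_pos, mul_comm]
  calc (k + 1) * mgDecs k (fun _ => 0) l
      ≤ ∑ x, mgRun k l x + (k + 1) * mgDecs k (fun _ => 0) l := Nat.le_add_left _ _
    _ ≤ ∑ _ : U, 0 + l.length := sum_foldl_mgStep_add_mul_mgDecs_le k _ l
    _ = l.length := by rw [Finset.sum_const_zero, zero_add]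

end MisraGries

/-- For every `t ∈ {0,…,N}` and every item `x`, the Misra-Gries
table after `t` items satisfies `C_t[x] ≤ f_x(t)`, the deficiency
`f_x(t) − C_t[x]` is at most the number of decrement steps performed during the
first `t` items, and consequently `f_x(t) ≤ C_t[x] + ⌊t/(k+1)⌋`. -/
theorem misraGries_prefix_bounds {U : Type*} [Fintype U] [DecidableEq U]
    (S : List U) (k : ℕ) (hk : 0 < k) :
    ∀ t ≤ S.length, ∀ x : U,
      mgRun k (S.take t) x ≤ (S.take t).count x ∧
      (S.take t).count x - mgRun k (S.take t) x ≤ mgDecs k (fun _ => 0) (S.take t) ∧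
      (S.take t).count x ≤ mgRun k (S.take t) x + t / (k + 1) := by
  intro t _ x
  have deficit := count_le_mgRun_apply_add_mgDecs k (S.take t) x
  have decs_le : mgDecs k (fun _ => 0) (S.take t) ≤ t / (k + 1) :=
    (mgDecs_zero_le_length_div k (S.take t)).trans
      (Nat.div_le_div_right (S.length_take_le t))
  exact ⟨mgRun_apply_le_count k (S.take t) x, Nat.sub_le_iff_le_add'.mpr deficit,
    deficit.trans (Nat.add_le_add_left decs_le _)⟩
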